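/- arXiv:1208.5521 — 2 statements merged into one kernel-verified Lean document; each statement's English description precedes it below -/
import Mathlib

section
/- Let X ⊆ 2^ℕ be a set with the property that for every Hausdorff function h, X can be written as a countable increasing union of sets each with zero upper box premeasure B₀^h. Then X + N is Lebesgue-null for every Lebesgue-null set N ⊆ 2^ℕ (i.e., X is null-additive). -/
open Set Filter MeasureTheory ENNReal

/-- A Hausdorff (gauge) function: nondecreasing, right-continuous on `[0,∞)`,
vanishing exactly at `0`. -/
def IsHausdorffFn (h : ℝ → ℝ) : Prop :=
  (∀ r, 0 ≤ r → 0 ≤ h r) ∧ MonotoneOn h (Set.Ici 0) ∧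
  (∀ r, 0 ≤ r → ContinuousWithinAt h (Set.Ici r) r) ∧
  ∀ r, 0 ≤ r → (h r = 0 ↔ r = 0)

/-- The `h`-dimensional Hausdorff measure associated to a gauge function `h`. -/
noncomputable def hMeas (h : ℝ → ℝ) {X : Type*} [EMetricSpace X] [MeasurableSpace X]
    [BorelSpace X] : Measure X :=
  Measure.mkMetric (fun r => ENNReal.ofReal (h r.toReal))

/-- Covering number: least number of sets of diameter at most `δ` covering `E`. -/
noncomputable def covNum {X : Type*} [EMetricSpace X] (E : Set X) (δ : ℝ≥0∞) : ℕ∞ :=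
  sInf ((fun 𝒰 : Finset (Set X) => (𝒰.card : ℕ∞)) ''
    {𝒰 | (E ⊆ ⋃ U ∈ 𝒰, U) ∧ ∀ U ∈ 𝒰, EMetric.diam U ≤ δ})

/-- Upper box premeasure `B₀^g(E) = limsup_{r→0+} N_E(r)·g(r)`. -/
noncomputable def ubox0 {X : Type*} [EMetricSpace X] (E : Set X) (g : ℝ → ℝ) : ℝ≥0∞ :=
  Filter.limsup (fun r : ℝ => (covNum E (ENNReal.ofReal r) : ℝ≥0∞) * ENNReal.ofReal (g r))
    (nhdsWithin 0 (Set.Ioi 0))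

/-- Cantor space `2^ℕ` with the metric `d(x,y) = 2^{-min{i : x i ≠ y i}}`. -/
noncomputable instance : MetricSpace (ℕ → Bool) :=
  PiNat.metricSpaceOfDiscreteUniformity fun _ => rfl

/-!
Cover a `g`-null set `N` infinitely often by sets `Tᵢ` of diameter at most `rᵢ` with
`∑ g(rᵢ) < ∞`. By Tonelli, the sum still converges after division by `h(rᵢ)` for some gauge `h`
decaying slowly enough. If `E` has zero upper box premeasure for `h`, then eventually
`N_E(rᵢ) ≤ 1 / h(rᵢ)`, and combining with `Tᵢ` by a nonexpanding operation keeps the diameters of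
the covering sets at most `rᵢ`. Hence `E + N` is covered infinitely often by the sets `E + Tᵢ`,
whose total `g`-cost `∑ N_E(rᵢ) g(rᵢ)` is finite, and the Borel–Cantelli lemma applied to each
premeasure `H^g_δ` shows that `E + N` is `g`-null.
-/

open scoped Topology

namespace IsHausdorffFn

variable {g : ℝ → ℝ}

theorem pos (hg : IsHausdorffFn g) {r : ℝ} (hr : 0 < r) : 0 < g r :=
  (hg.1 r hr.le).lt_of_ne fun h => hr.ne' ((hg.2.2.2 r hr.le).1 h.symm)

theorem tendsto_nhdsGT_zero {ι : Type*} {l : Filter ι} (hg : IsHausdorffFn g) {r : ι → ℝ}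
    (hr : ∀ i, 0 < r i) (hgr : Tendsto (fun i => ENNReal.ofReal (g (r i))) l (𝓝 0)) :
    Tendsto r l (𝓝[>] 0) := by
  refine tendsto_nhdsWithin_iff.2 ⟨tendsto_order.2
    ⟨fun b hb => .of_forall fun i => hb.trans (hr i), fun ε hε => ?_⟩, .of_forall hr⟩
  filter_upwards [hgr.eventually_lt_const (ENNReal.ofReal_pos.2 (hg.pos hε))] with i hi
  exact hg.2.1.reflect_lt (hr i).le hε.le ((ENNReal.ofReal_lt_ofReal_iff (hg.pos hε)).1 hi)

theorem exists_gt_ofReal_lt_add (hg : IsHausdorffFn g) {d : ℝ} (hd : 0 ≤ d) {ε : ℝ≥0∞}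
    (hε : ε ≠ 0) : ∃ r > d, ENNReal.ofReal (g r) < ENNReal.ofReal (g d) + ε := by
  have htendsto : Tendsto (fun r => ENNReal.ofReal (g r)) (𝓝[>] d) (𝓝 (ENNReal.ofReal (g d))) :=
    ENNReal.tendsto_ofReal ((hg.2.2.1 d hd).mono Ioi_subset_Ici_self)
  have hclose := htendsto.eventually_lt_const (ENNReal.lt_add_right ENNReal.ofReal_ne_top hε)
  exact (eventually_mem_nhdsWithin.and hclose).exists

theorem id : IsHausdorffFn fun r => r :=
  ⟨fun _ hr => hr, monotone_id.monotoneOn _, fun _ _ => continuous_id.continuousWithinAt,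
    fun _ _ => Iff.rfl⟩

end IsHausdorffFn

section SlowGauge

theorem continuousWithinAt_Ici_of_antitone {α β : Type*} [TopologicalSpace α] [Preorder α]
    [TopologicalSpace β] [LinearOrder β] [OrderTopology β] {φ : α → β} (hanti : Antitone φ)
    {x : α} (hlsc : LowerSemicontinuousAt φ x) : ContinuousWithinAt φ (Ici x) x :=
  tendsto_order.2 ⟨fun b hb => (hlsc b hb).filter_mono nhdsWithin_le_nhds, fun _ hb =>
    eventually_nhdsWithin_of_forall fun _ hy => (hanti hy).trans_lt hb⟩

theorem isHausdorffFn_toReal_inv {φ : ℝ → ℝ≥0∞} (hanti : Antitone φ)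
    (hlsc : LowerSemicontinuous φ) (hzero : ∀ r, φ r ≠ 0) (htop : ∀ r, 0 ≤ r → (φ r = ∞ ↔ r = 0)) :
    IsHausdorffFn fun r => (φ r)⁻¹.toReal := by
  have hfin : ∀ r, (φ r)⁻¹ ≠ ∞ := fun r => ENNReal.inv_ne_top.2 (hzero r)
  refine ⟨fun r _ => ENNReal.toReal_nonneg, fun r _ s _ hrs => ?_, fun r _ => ?_, fun r hr => ?_⟩
  · exact ENNReal.toReal_mono (hfin s) (ENNReal.inv_le_inv.2 (hanti hrs))
  · exact (ENNReal.tendsto_toReal (hfin r)).comp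
      (continuousWithinAt_Ici_of_antitone hanti (hlsc r)).inv
  · rw [ENNReal.toReal_eq_zero_iff, or_iff_left (hfin r), ENNReal.inv_eq_zero, htop r hr]

/-- The counting function `r ↦ 1 + #{j : r < δⱼ}`. Its reciprocal is the slowly decaying gauge; the
summand `1` keeps the reciprocal finite for large `r`, and the thresholds enter as a sum of
indicators so that the order of summation can be exchanged. -/
noncomputable def thresholdCount (δ : ℕ → ℝ) (r : ℝ) : ℝ≥0∞ :=
  1 + ∑' j, (Iio (δ j)).indicator 1 r

theorem antitone_thresholdCount (δ : ℕ → ℝ) : Antitone (thresholdCount δ) := fun r s hrs => by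
  refine add_le_add_right (ENNReal.tsum_le_tsum fun j => ?_) 1
  refine indicator_apply_le' (fun hs => ?_) fun _ => zero_le
  rw [indicator_of_mem (mem_Iio.2 (hrs.trans_lt hs)), Pi.one_apply, Pi.one_apply]

theorem lowerSemicontinuous_thresholdCount (δ : ℕ → ℝ) :
    LowerSemicontinuous (thresholdCount δ) :=
  lowerSemicontinuous_const.add <| lowerSemicontinuous_tsum fun _ =>
    isOpen_Iio.lowerSemicontinuous_indicator zero_le_one

theorem thresholdCount_eq_top_iff {δ : ℕ → ℝ} (hpos : ∀ j, 0 < δ j)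
    (hδ : Tendsto δ atTop (𝓝 0)) {r : ℝ} (hr : 0 ≤ r) : thresholdCount δ r = ∞ ↔ r = 0 := by
  refine ⟨fun htop => by_contra fun hne => ?_, ?_⟩
  · have hfin : {j | ¬ δ j < r}.Finite := by
      rw [← eventually_cofinite, Nat.cofinite_eq_atTop]
      exact hδ.eventually_lt_const (hr.lt_of_ne' hne)
    refine ENNReal.add_ne_top.2 ⟨ENNReal.one_ne_top, ?_⟩ htop
    rw [tsum_eq_sum (s := hfin.toFinset) fun j hj => ?_]
    · exact ENNReal.sum_ne_top.2 fun j _ =>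
        (indicator_le_self' (fun _ _ => zero_le) r).trans_lt ENNReal.one_lt_top |>.ne
    · simp only [hfin.mem_toFinset, mem_ofPred_eq, not_not] at hj
      exact indicator_of_notMem (notMem_Iio.2 hj.le) 1
  · rintro rfl
    simp [thresholdCount, hpos]

theorem tendsto_tsum_indicator_Iio {ι : Type*} {r : ι → ℝ} {a : ι → ℝ≥0∞} (hr : ∀ i, 0 < r i)
    (ha : ∑' i, a i ≠ ∞) :
    Tendsto (fun δ => ∑' i, (Iio δ).indicator 1 (r i) * a i) (𝓝[>] 0) (𝓝 0) := by
  refine ENNReal.tendsto_nhds_zero.2 fun ε hε => ?_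
  obtain ⟨F, hF⟩ :=
    ((ENNReal.tendsto_tsum_compl_atTop_zero ha).eventually_lt_const hε).exists
  have hbelow : ∀ᶠ δ in 𝓝[>] (0 : ℝ), ∀ i ∈ F, δ < r i :=
    (Filter.eventually_all_finset F).2 fun i _ =>
      eventually_nhdsWithin_of_eventually_nhds (eventually_lt_nhds (hr i))
  filter_upwards [hbelow] with δ hδ
  refine le_trans (ENNReal.tsum_le_tsum fun i => ?_)
    ((tsum_subtype {i | i ∉ F} a).symm.trans_le hF.le)
  by_cases hi : i ∈ F
  · simp [(hδ i hi).le]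
  · rw [indicator_of_mem (by exact hi : i ∈ {i | i ∉ F})]
    exact mul_le_of_le_one_left' (indicator_le_self' (fun _ _ => zero_le) (r i))

theorem exists_isHausdorffFn_tsum_inv_mul_ne_top {ι : Type*} {r : ι → ℝ} {a : ι → ℝ≥0∞}
    (hr : ∀ i, 0 < r i) (ha : ∑' i, a i ≠ ∞) :
    ∃ h, IsHausdorffFn h ∧ ∑' i, (ENNReal.ofReal (h (r i)))⁻¹ * a i ≠ ∞ := by
  obtain ⟨η, hη, hηsum⟩ := ENNReal.exists_pos_sum_of_countable' one_ne_zero ℕ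
  have hthreshold : ∀ j : ℕ, ∃ δ : ℝ, 0 < δ ∧ δ < (1 / 2 : ℝ) ^ j ∧
      ∑' i, (Iio δ).indicator 1 (r i) * a i < η j := fun j =>
    (eventually_mem_nhdsWithin.and
      ((eventually_nhdsWithin_of_eventually_nhds (eventually_lt_nhds (by positivity))).and
        ((tendsto_tsum_indicator_Iio hr ha).eventually_lt_const (hη j)))).exists
  choose δ hδ hδpow hδη using hthreshold
  have hδzero : Tendsto δ atTop (𝓝 0) :=
    squeeze_zero (fun j => (hδ j).le) (fun j => (hδpow j).le)
      (tendsto_pow_atTop_nhds_zero_of_lt_one one_half_pos.le one_half_lt_one)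
  have hne_zero : ∀ r, thresholdCount δ r ≠ 0 := fun r => (one_pos.trans_le le_self_add).ne'
  refine ⟨_, isHausdorffFn_toReal_inv (antitone_thresholdCount δ)
    (lowerSemicontinuous_thresholdCount δ) hne_zero
      fun r => thresholdCount_eq_top_iff hδ hδzero, ?_⟩
  have hsum : ∑' i, thresholdCount δ (r i) * a i =
      ∑' i, a i + ∑' j, ∑' i, (Iio (δ j)).indicator 1 (r i) * a i := by
    simp only [thresholdCount, add_mul, one_mul, ← ENNReal.tsum_mul_right]
    rw [ENNReal.tsum_add, ENNReal.tsum_comm]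
  simp only [ENNReal.ofReal_toReal (ENNReal.inv_ne_top.2 (hne_zero _)), inv_inv, hsum]
  refine ENNReal.add_ne_top.2 ⟨ha, ne_top_of_le_ne_top hηsum.ne_top ?_⟩
  exact ENNReal.tsum_le_tsum fun j => (hδη j).le

end SlowGauge

section CoveringNumber

variable {X Y Z : Type*} [EMetricSpace X] [EMetricSpace Y] [EMetricSpace Z]

theorem exists_finset_card_eq_covNum {E : Set X} {δ : ℝ≥0∞} (hE : covNum E δ ≠ ⊤) :
    ∃ 𝒰 : Finset (Set X), E ⊆ ⋃ U ∈ 𝒰, U ∧ (∀ U ∈ 𝒰, Metric.ediam U ≤ δ) ∧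
      (𝒰.card : ℕ∞) = covNum E δ := by
  obtain ⟨𝒰, ⟨hcover, hdiam⟩, hcard⟩ :=
    csInf_mem (nonempty_iff_ne_empty.2 fun h => hE ((congrArg sInf h).trans sInf_empty))
  exact ⟨𝒰, hcover, hdiam, hcard⟩

theorem ediam_image2_le {f : X → Y → Z} (hf : LipschitzWith 1 (Function.uncurry f)) {U : Set X}
    {T : Set Y} {δ : ℝ≥0∞} (hU : Metric.ediam U ≤ δ) (hT : Metric.ediam T ≤ δ) :
    Metric.ediam (image2 f U T) ≤ δ := by
  refine Metric.ediam_le ?_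
  rintro _ ⟨x, hx, y, hy, rfl⟩ _ ⟨x', hx', y', hy', rfl⟩
  calc edist (f x y) (f x' y') ≤ edist (x, y) (x', y') := by simpa using hf (x, y) (x', y')
    _ ≤ δ := max_le (Metric.edist_le_of_ediam_le hx hx' hU) (Metric.edist_le_of_ediam_le hy hy' hT)

theorem covNum_image2_le {f : X → Y → Z} (hf : LipschitzWith 1 (Function.uncurry f)) (E : Set X)
    {T : Set Y} {δ : ℝ≥0∞} (hT : Metric.ediam T ≤ δ) : covNum (image2 f E T) δ ≤ covNum E δ := by
  classical
  refine le_sInf ?_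
  rintro _ ⟨𝒰, ⟨hcover, hdiam⟩, rfl⟩
  refine sInf_le_of_le ⟨𝒰.image (image2 f · T), ⟨?_, ?_⟩, rfl⟩
    (Nat.cast_le.2 Finset.card_image_le)
  · rw [Finset.set_biUnion_finset_image, ← image2_iUnion₂_left]
    exact image2_subset_right hcover
  · exact Finset.forall_mem_image.2 fun U hU => ediam_image2_le hf (hdiam U hU) hT

theorem eventually_covNum_le_inv {E : Set X} {h : ℝ → ℝ} (hE : ubox0 E h < 1) :
    ∀ᶠ r in 𝓝[>] 0, (covNum E (ENNReal.ofReal r) : ℝ≥0∞) ≤ (ENNReal.ofReal (h r))⁻¹ :=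
  (eventually_lt_of_limsup_lt hE).mono fun _ hr => ENNReal.le_inv_iff_mul_le.2 hr.le

end CoveringNumber

section HausdorffNull

variable {X : Type*} [EMetricSpace X] {g : ℝ → ℝ}

/-- The size-`δ` Hausdorff premeasure `H^g_δ`, whose supremum over `δ > 0` is `hMeas g`. -/
noncomputable def hPremeas (g : ℝ → ℝ) (δ : ℝ≥0∞) : OuterMeasure X :=
  OuterMeasure.mkMetric'.pre (fun s => ENNReal.ofReal (g (Metric.ediam s).toReal)) δ

theorem hMeas_eq_iSup_hPremeas [MeasurableSpace X] [BorelSpace X] (g : ℝ → ℝ) (s : Set X) :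
    hMeas g s = ⨆ δ > 0, hPremeas g δ s := by
  rw [hMeas, ← OuterMeasure.coe_mkMetric]
  simp only [OuterMeasure.mkMetric, OuterMeasure.mkMetric', OuterMeasure.iSup_apply, hPremeas]

theorem hPremeas_le (hg : IsHausdorffFn g) {s : Set X} {r : ℝ} {δ : ℝ≥0∞} (hr : 0 ≤ r)
    (hs : Metric.ediam s ≤ ENNReal.ofReal r) (hrδ : ENNReal.ofReal r ≤ δ) :
    hPremeas g δ s ≤ ENNReal.ofReal (g r) := by
  refine (OuterMeasure.mkMetric'.pre_le (hs.trans hrδ)).trans (ENNReal.ofReal_le_ofReal ?_)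
  exact hg.2.1 ENNReal.toReal_nonneg hr (ENNReal.toReal_le_of_le_ofReal hr hs)

theorem hPremeas_le_covNum_mul (hg : IsHausdorffFn g) (s : Set X) {r : ℝ} {δ : ℝ≥0∞} (hr : 0 < r)
    (hrδ : ENNReal.ofReal r ≤ δ) :
    hPremeas g δ s ≤ covNum s (ENNReal.ofReal r) * ENNReal.ofReal (g r) := by
  by_cases htop : covNum s (ENNReal.ofReal r) = ⊤
  · simp [htop, ENNReal.top_mul, hg.pos hr]
  obtain ⟨𝒰, hcover, hdiam, hcard⟩ := exists_finset_card_eq_covNum htop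
  calc hPremeas g δ s ≤ hPremeas g δ (⋃ U ∈ 𝒰, U) := measure_mono hcover
    _ ≤ ∑ U ∈ 𝒰, hPremeas g δ U := measure_biUnion_finset_le 𝒰 _
    _ ≤ 𝒰.card • ENNReal.ofReal (g r) :=
        Finset.sum_le_card_nsmul _ _ _ fun U hU => hPremeas_le hg hr.le (hdiam U hU) hrδ
    _ = covNum s (ENNReal.ofReal r) * ENNReal.ofReal (g r) := by
        rw [← hcard, nsmul_eq_mul, ENat.toENNReal_coe]

theorem measure_limsup_cofinite_eq_zero_of_eventually_le {α ι F : Type*} [FunLike F (Set α) ℝ≥0∞]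
    [OuterMeasureClass F α] [Countable ι] {μ : F} {s : ι → Set α} {b : ι → ℝ≥0∞}
    (hb : ∑' i, b i ≠ ∞) (hs : ∀ᶠ i in cofinite, μ (s i) ≤ b i) :
    μ (limsup s cofinite) = 0 := by
  classical
  let t : ι → Set α := fun i => if μ (s i) ≤ b i then s i else ∅
  have hst : s =ᶠ[cofinite] t := hs.mono fun i hi => (if_pos hi).symm
  rw [limsup_congr hst]
  refine measure_limsup_cofinite_eq_zero (ne_top_of_le_ne_top hb (ENNReal.tsum_le_tsum fun i => ?_))
  by_cases hi : μ (s i) ≤ b i <;> simp [t, hi]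

theorem hMeas_limsup_cofinite_eq_zero [MeasurableSpace X] [BorelSpace X] (hg : IsHausdorffFn g)
    {ι : Type*} [Countable ι] {W : ι → Set X} {r : ι → ℝ} {c : ι → ℝ≥0∞}
    (hr : Tendsto r cofinite (𝓝[>] 0)) (hc : ∑' i, c i * ENNReal.ofReal (g (r i)) ≠ ∞)
    (hW : ∀ᶠ i in cofinite, covNum (W i) (ENNReal.ofReal (r i)) ≤ c i) :
    hMeas g (limsup W cofinite) = 0 := by
  simp only [hMeas_eq_iSup_hPremeas, ENNReal.iSup_eq_zero]
  intro δ hδ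
  have hsmall : ∀ᶠ i in cofinite, ENNReal.ofReal (r i) < δ :=
    (ENNReal.tendsto_ofReal (hr.mono_right nhdsWithin_le_nhds)).eventually_lt_const (by simpa)
  refine measure_limsup_cofinite_eq_zero_of_eventually_le hc ?_
  filter_upwards [hr.eventually self_mem_nhdsWithin, hsmall, hW] with i hi hiδ hiW
  exact (hPremeas_le_covNum_mul hg (W i) hi hiδ.le).trans (mul_le_mul_left hiW _)

theorem exists_cover_tsum_le_of_hMeas_eq_zero [MeasurableSpace X] [BorelSpace X]
    (hg : IsHausdorffFn g) {N : Set X} (hN : hMeas g N = 0) {ε : ℝ≥0∞} (hε : ε ≠ 0) :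
    ∃ (T : ℕ → Set X) (r : ℕ → ℝ), N ⊆ ⋃ k, T k ∧ (∀ k, 0 < r k) ∧
      (∀ k, Metric.ediam (T k) ≤ ENNReal.ofReal (r k)) ∧
      ∑' k, ENNReal.ofReal (g (r k)) ≤ ε := by
  obtain ⟨η, hη, hηsum⟩ := ENNReal.exists_pos_sum_of_countable' (ENNReal.half_pos hε).ne' ℕ
  obtain ⟨T, hcover, hfin, hsum⟩ : ∃ T : ℕ → Set X, N ⊆ ⋃ k, T k ∧
      (∀ k, Metric.ediam (T k) ≤ 1) ∧
      ∑' k, ⨆ _ : (T k).Nonempty, ENNReal.ofReal (g (Metric.ediam (T k)).toReal) < ε / 2 := by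
    rw [hMeas, Measure.mkMetric_apply] at hN
    have hlt := (ENNReal.iSup_eq_zero.1 (ENNReal.iSup_eq_zero.1 hN 1) one_pos).trans_lt
      (ENNReal.half_pos hε)
    simpa only [iInf_lt_iff, exists_prop] using hlt
  have hle_iSup : ∀ k, ENNReal.ofReal (g (Metric.ediam (T k)).toReal) ≤
      ⨆ _ : (T k).Nonempty, ENNReal.ofReal (g (Metric.ediam (T k)).toReal) := fun k => by
    rcases (T k).eq_empty_or_nonempty with hT | hT
    · simp [hT, (hg.2.2.2 0 le_rfl).2 rfl]
    · exact le_iSup_of_le hT le_rfl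
  choose r hr hgr using fun k => hg.exists_gt_ofReal_lt_add
    (ENNReal.toReal_nonneg (a := Metric.ediam (T k))) (hη k).ne'
  refine ⟨T, r, hcover, fun k => ENNReal.toReal_nonneg.trans_lt (hr k), fun k => ?_, ?_⟩
  · exact ENNReal.le_ofReal_iff_toReal_le (ne_top_of_le_ne_top ENNReal.one_ne_top (hfin k))
      (ENNReal.toReal_nonneg.trans (hr k).le) |>.2 (hr k).le
  · calc ∑' k, ENNReal.ofReal (g (r k))
        ≤ ∑' k, ((⨆ _ : (T k).Nonempty, ENNReal.ofReal (g (Metric.ediam (T k)).toReal)) + η k) :=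
          ENNReal.tsum_le_tsum fun k => (hgr k).le.trans (add_le_add_left (hle_iSup k) _)
      _ ≤ ε / 2 + ε / 2 := ENNReal.tsum_add.trans_le (add_le_add hsum.le hηsum.le)
      _ = ε := ENNReal.add_halves ε

theorem exists_limsup_cover_of_hMeas_eq_zero [MeasurableSpace X] [BorelSpace X]
    (hg : IsHausdorffFn g) {N : Set X} (hN : hMeas g N = 0) :
    ∃ (T : ℕ × ℕ → Set X) (r : ℕ × ℕ → ℝ), N ⊆ limsup T cofinite ∧ (∀ i, 0 < r i) ∧
      (∀ i, Metric.ediam (T i) ≤ ENNReal.ofReal (r i)) ∧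
      ∑' i, ENNReal.ofReal (g (r i)) ≠ ∞ := by
  obtain ⟨ε, hε, hεsum⟩ := ENNReal.exists_pos_sum_of_countable' one_ne_zero ℕ
  choose T r hcover hr hT hsum using fun n =>
    exists_cover_tsum_le_of_hMeas_eq_zero hg hN (hε n).ne'
  refine ⟨fun i => T i.1 i.2, fun i => r i.1 i.2, fun x hx => ?_, fun i => hr i.1 i.2,
    fun i => hT i.1 i.2, ?_⟩
  · choose k hk using fun n => mem_iUnion.1 (hcover n hx)
    rw [mem_limsup_iff_frequently_mem, frequently_cofinite_iff_infinite]
    exact infinite_of_injective_forall_mem (f := fun n => (n, k n))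
      (fun m n hmn => congrArg Prod.fst hmn) hk
  · rw [ENNReal.tsum_prod']
    exact ne_top_of_le_ne_top hεsum.ne_top (ENNReal.tsum_le_tsum hsum)

end HausdorffNull

theorem image2_limsup_subset {ι α β γ : Type*} (f : α → β → γ) (s : Set α) (t : ι → Set β)
    (l : Filter ι) : image2 f s (limsup t l) ⊆ limsup (fun i => image2 f s (t i)) l := by
  rintro _ ⟨x, hx, y, hy, rfl⟩
  rw [mem_limsup_iff_frequently_mem] at hy ⊢
  exact hy.mono fun _ hyi => mem_image2_of_mem hx hyi

theorem stmt16_general {X Y Z : Type*} [EMetricSpace X] [EMetricSpace Y] [MeasurableSpace Y]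
    [BorelSpace Y] [EMetricSpace Z] [MeasurableSpace Z] [BorelSpace Z] {g : ℝ → ℝ}
    (hg : IsHausdorffFn g) {f : X → Y → Z} (hf : LipschitzWith 1 (Function.uncurry f)) {E : Set X}
    (hE : ∀ h, IsHausdorffFn h → ∃ En : ℕ → Set X, ⋃ n, En n = E ∧ ∀ n, ubox0 (En n) h = 0)
    {N : Set Y} (hN : hMeas g N = 0) : hMeas g (image2 f E N) = 0 := by
  obtain ⟨T, r, hcover, hr, hT, hsum⟩ := exists_limsup_cover_of_hMeas_eq_zero hg hN
  obtain ⟨h, hh, hhsum⟩ := exists_isHausdorffFn_tsum_inv_mul_ne_top hr hsum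
  obtain ⟨En, rfl, hEn⟩ := hE h hh
  have hr_zero : Tendsto r cofinite (𝓝[>] 0) :=
    hg.tendsto_nhdsGT_zero hr (ENNReal.tendsto_cofinite_zero_of_tsum_ne_top hsum)
  rw [image2_iUnion_left]
  refine measure_iUnion_null fun n => ?_
  suffices hMeas g (limsup (fun i => image2 f (En n) (T i)) cofinite) = 0 from
    measure_mono_null ((image2_subset_left hcover).trans (image2_limsup_subset f _ T _)) this
  refine hMeas_limsup_cofinite_eq_zero hg hr_zero hhsum ?_
  filter_upwards [hr_zero.eventually (eventually_covNum_le_inv ((hEn n).trans_lt one_pos))]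
    with i hi
  exact (ENat.toENNReal_mono (covNum_image2_le hf (En n) (hT i))).trans hi

theorem lipschitzWith_uncurry_coordinatewise (op : ℕ → Bool → Bool → Bool) :
    LipschitzWith 1 (Function.uncurry fun x y : ℕ → Bool => fun i => op i (x i) (y i)) := by
  refine LipschitzWith.of_dist_le_mul fun ⟨x, y⟩ ⟨x', y'⟩ => ?_
  rw [NNReal.coe_one, one_mul, Prod.dist_eq, Function.uncurry_apply_pair,
    Function.uncurry_apply_pair]
  set u : ℕ → Bool := fun i => op i (x i) (y i)
  set v : ℕ → Bool := fun i => op i (x' i) (y' i)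
  rcases eq_or_ne u v with huv | huv
  · simp [huv]
  by_contra! hlt
  have hdist : dist u v = (1 / 2 : ℝ) ^ PiNat.firstDiff u v := PiNat.dist_eq_of_ne huv
  rw [hdist, max_lt_iff] at hlt
  have hx : x (PiNat.firstDiff u v) = x' (PiNat.firstDiff u v) :=
    PiNat.apply_eq_of_dist_lt hlt.1 le_rfl
  have hy : y (PiNat.firstDiff u v) = y' (PiNat.firstDiff u v) :=
    PiNat.apply_eq_of_dist_lt hlt.2 le_rfl
  exact PiNat.apply_firstDiff_ne huv (congrArg₂ (op _) hx hy)

/-- If `X ⊆ 2^ℕ` is, for every Hausdorff function `h`, a countable increasing union of sets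
of zero upper box premeasure `B₀^h`, then `X` is null-additive: `X + N` is null (w.r.t. the
Haar/product measure, which is `H^1`) for every null `N`. -/
theorem stmt16 (X : Set (ℕ → Bool))
    (hyp : ∀ h : ℝ → ℝ, IsHausdorffFn h →
      ∃ Xn : ℕ → Set (ℕ → Bool), Monotone Xn ∧ (⋃ n, Xn n) = X ∧
        ∀ n, ubox0 (Xn n) h = 0) :
    ∀ N : Set (ℕ → Bool), hMeas (fun r => r) N = 0 →
      hMeas (fun r => r)
        (Set.image2 (fun x y : ℕ → Bool => fun i => xor (x i) (y i)) X N) = 0 := by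
  intro N hN
  exact stmt16_general .id (lipschitzWith_uncurry_coordinatewise fun _ => xor)
    (fun h hh => (hyp h hh).imp fun _ hXn => hXn.2) hN
end

section
/- Suppose X ⊆ 2^ℕ is null-additive, i.e., X + N is μ-null for every μ-null N, where μ is the Haar product measure on the Cantor group. Then for every Hausdorff function h, X is a countable increasing union of sets X_n with limsup_{r→0} N_{X_n}(r)·h(r) ≤ 1 (so X has σ-finite, indeed zero, packing-type dimension for every gauge). -/
open Set Filter MeasureTheory ENNReal

/-!
Addition on `ι → Bool` is coordinatewise `xor`, so every point is its own inverse.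

Let `E n` be the set of `y` vanishing on a window of `n` coordinates, where the window is looked up
from the prefix of `y` of length `f n` and different prefixes have disjoint windows. As `E n` has
measure `2⁻ⁿ`, the limsup `N` of these sets is null, so `X + N` does not have full measure and is
disjoint from some closed set `K` of positive measure: each `x ∈ X` and `y ∈ K` satisfy
`x + y ∉ E n` for large `n`. By the Baire category theorem on the support of `μ` restricted to `K`,
countably many sets `V` of positive measure suffice to give every `x ∈ X` some `V` and `m` with
`x + V` disjoint from `E n` for all `n ≥ m`. Once the prefix of `y` is given, the events
`x + y ∈ E n` for points `x` with distinct prefixes look at disjoint windows and hence are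
independent. So the points served by one pair `(V, m)` have `q` prefixes of length `f n` only if
`μ V ≤ (1 - 2⁻ⁿ) ^ q`, which bounds `q` by some `k n`. Since `k` does not depend on `f`, we may
afterwards let `f` grow fast enough that `h` beats the covering numbers.
-/

open ProbabilityTheory TopologicalSpace
open scoped Topology Pointwise

section Independence

variable {ι κ : Type*} {Ω : ι → Type*} {mΩ : ∀ i, MeasurableSpace (Ω i)}

lemma iIndepFun_restrict_infinitePi (P : ∀ i, Measure (Ω i)) [∀ i, IsProbabilityMeasure (P i)]
    {T : κ → Finset ι} (hT : Pairwise (Function.onFun Disjoint T)) :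
    iIndepFun (fun k ↦ (T k).restrict) (Measure.infinitePi P) := by
  have hinj : Function.Injective fun q : Σ k, T k ↦ (q.2 : ι) := by
    rintro ⟨k, i, hi⟩ ⟨l, j, hj⟩ (rfl : i = j)
    obtain rfl : k = l := hT.eq (Finset.not_disjoint_iff.2 ⟨i, hi, hj⟩)
    rfl
  rw [iIndepFun_iff_map_fun_eq_infinitePi_map fun k ↦ Finset.measurable_restrict (T k)]
  calc (Measure.infinitePi P).map (fun y k ↦ (T k).restrict y)
      = ((Measure.infinitePi P).map fun y (q : Σ k, T k) ↦ y q.2).map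
          (MeasurableEquiv.piCurry fun k (i : T k) ↦ Ω i) := by
        rw [Measure.map_map (by fun_prop) (by fun_prop)]; rfl
    _ = Measure.infinitePi fun k ↦ Measure.infinitePi fun i : T k ↦ P i := by
        rw [Measure.map_infinitePi_infinitePi_of_inj hinj]
        exact Measure.infinitePi_map_piCurry fun k (i : T k) ↦ P i
    _ = Measure.infinitePi fun k ↦ (Measure.infinitePi P).map (T k).restrict := by
        simp only [Measure.infinitePi_map_restrict, Measure.infinitePi_eq_pi]

end Independence

/-- The fair coin-tossing measure on `ι → Bool`, i.e. the product of the uniform probability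
measures on the factors. For `ι = ℕ` this is the Haar measure of the Cantor group. -/
noncomputable def coinMeasure (ι : Type*) : Measure (ι → Bool) :=
  Measure.infinitePi fun _ ↦ (PMF.uniformOfFintype Bool).toMeasure

instance (ι : Type*) : IsProbabilityMeasure (coinMeasure ι) := by
  unfold coinMeasure; infer_instance

section CoinMeasure

variable {ι κ : Type*}

lemma coinMeasure_restrict_preimage_singleton (S : Finset ι) (v : S → Bool) :
    coinMeasure ι (S.restrict ⁻¹' {v}) = 2⁻¹ ^ S.card := by
  rw [← Measure.map_apply (Finset.measurable_restrict S) (measurableSet_singleton v), coinMeasure,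
    Measure.infinitePi_map_restrict, Measure.pi_singleton]
  simp

lemma coinMeasure_restrict_preimage_inter_iInter_compl [Fintype κ] {S : Finset ι}
    {T : κ → Finset ι} (hT : Pairwise (Function.onFun Disjoint T)) (hST : ∀ k, Disjoint S (T k))
    (v : S → Bool) (w : ∀ k, T k → Bool) :
    coinMeasure ι (S.restrict ⁻¹' {v} ∩ ⋂ k, (T k).restrict ⁻¹' {w k}ᶜ) =
      2⁻¹ ^ S.card * ∏ k, (1 - 2⁻¹ ^ (T k).card) := by
  let U : Option κ → Finset ι := fun o ↦ o.elim S T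
  let B : ∀ o, Set (U o → Bool) := fun o ↦ Option.rec {v} (fun k ↦ {w k}ᶜ) o
  have hU : Pairwise (Function.onFun Disjoint U) := by
    rintro (_ | k) (_ | l) hkl
    exacts [absurd rfl hkl, hST l, (hST k).symm, hT fun h ↦ hkl (congrArg some h)]
  have hind : iIndepFun (fun o ↦ (U o).restrict) (coinMeasure ι) :=
    iIndepFun_restrict_infinitePi _ hU
  have hmul := hind.measure_inter_preimage_eq_mul Finset.univ (sets := B) fun o _ ↦ .of_discrete
  have hcompl (k : κ) : coinMeasure ι ((T k).restrict ⁻¹' {w k}ᶜ) = 1 - 2⁻¹ ^ (T k).card := by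
    rw [preimage_compl, prob_compl_eq_one_sub
      ((Finset.measurable_restrict _) (measurableSet_singleton _)),
      coinMeasure_restrict_preimage_singleton]
  simp only [Finset.mem_univ, iInter_true, iInter_option, Fintype.prod_option] at hmul
  refine hmul.trans ?_
  exact congrArg₂ _ (coinMeasure_restrict_preimage_singleton S v)
    (Finset.prod_congr rfl fun k _ ↦ hcompl k)

end CoinMeasure

section LookupZero

variable {ι : Type*} {S : Finset ι} {T : (S → Bool) → Finset ι} {p : ℕ}

/-- The sequences `y` vanishing on the window `T v`, where `v` is the restriction of `y` to `S`.
Since the window is looked up in `y` itself, translates of this set by points which differ on `S`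
use different windows. -/
def lookupZero (T : (S → Bool) → Finset ι) : Set (ι → Bool) :=
  {y | (T (S.restrict y)).restrict y = 0}

lemma lookupZero_eq_iUnion :
    lookupZero T = ⋃ v, S.restrict ⁻¹' {v} ∩ (T v).restrict ⁻¹' {0} := by
  ext y; simp [lookupZero]

lemma isOpen_lookupZero : IsOpen (lookupZero T) := by
  rw [lookupZero_eq_iUnion]
  exact isOpen_iUnion fun v ↦ ((isOpen_discrete _).preimage (Finset.continuous_restrict S)).inter
    ((isOpen_discrete _).preimage (Finset.continuous_restrict (T v)))

lemma measurableSet_lookupZero : MeasurableSet (lookupZero T) := by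
  rw [lookupZero_eq_iUnion]
  exact .iUnion fun v ↦ (Finset.measurable_restrict S .of_discrete).inter
    (Finset.measurable_restrict (T v) .of_discrete)

lemma add_mem_lookupZero_iff {x y : ι → Bool} :
    x + y ∈ lookupZero T ↔ (T (S.restrict x + S.restrict y)).restrict y =
      (T (S.restrict x + S.restrict y)).restrict x := by
  let W := T (S.restrict x + S.restrict y)
  change W.restrict (x + y) = 0 ↔ W.restrict y = W.restrict x
  simp only [funext_iff, Finset.restrict_def, Pi.add_apply, Pi.zero_apply, BooleanRing.add_eq_zero',
    eq_comm]

lemma coinMeasure_restrict_preimage_inter_forall_add_notMem_lookupZero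
    (hT : Pairwise (Function.onFun Disjoint T)) (hST : ∀ v, Disjoint S (T v))
    (hcard : ∀ v, (T v).card = p) {F : Finset (ι → Bool)}
    (hF : InjOn S.restrict (F : Set (ι → Bool))) (v : S → Bool) :
    coinMeasure ι (S.restrict ⁻¹' {v} ∩ {y | ∀ x ∈ F, x + y ∉ lookupZero T}) =
      2⁻¹ ^ S.card * (1 - 2⁻¹ ^ p) ^ F.card := by
  let W (x : F) : Finset ι := T (S.restrict x.1 + v)
  have hset : {y : ι → Bool | S.restrict y = v} ∩ {y | ∀ x ∈ F, x + y ∉ lookupZero T} =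
      {y | S.restrict y = v} ∩ ⋂ x : F, {y | (W x).restrict y = (W x).restrict x.1}ᶜ := by
    ext y
    simp only [mem_inter_iff, mem_ofPred_eq, mem_iInter, mem_compl_iff, add_mem_lookupZero_iff,
      Subtype.forall, W]
    exact and_congr_right fun h ↦ by rw [h]
  have hinj : Function.Injective fun x : F ↦ S.restrict x.1 + v :=
    (add_left_injective v).comp hF.injective
  refine (congrArg _ hset).trans ((coinMeasure_restrict_preimage_inter_iInter_compl
    (hT.comp_of_injective hinj) (fun _ ↦ hST _) v fun x ↦ (W x).restrict x.1).trans ?_)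
  simp [hcard]

lemma coinMeasure_forall_add_notMem_lookupZero
    (hT : Pairwise (Function.onFun Disjoint T)) (hST : ∀ v, Disjoint S (T v))
    (hcard : ∀ v, (T v).card = p) {F : Finset (ι → Bool)}
    (hF : InjOn S.restrict (F : Set (ι → Bool))) :
    coinMeasure ι {y | ∀ x ∈ F, x + y ∉ lookupZero T} = (1 - 2⁻¹ ^ p) ^ F.card := by
  classical
  have hmeas (v : S → Bool) : MeasurableSet (S.restrict ⁻¹' {v} : Set (ι → Bool)) :=
    Finset.measurable_restrict S (measurableSet_singleton v)
  set A := {y | ∀ x ∈ F, x + y ∉ lookupZero T}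
  calc coinMeasure ι A
      = ∑ v : S → Bool, coinMeasure ι (S.restrict ⁻¹' {v} ∩ A) := by
        have h := sum_measure_preimage_singleton (μ := (coinMeasure ι).restrict A) Finset.univ
          fun v _ ↦ hmeas v
        simpa [Measure.restrict_apply (hmeas _)] using h.symm
    _ = (1 - 2⁻¹ ^ p) ^ F.card := by
        simp [A, coinMeasure_restrict_preimage_inter_forall_add_notMem_lookupZero hT hST hcard hF,
          ← mul_assoc, ← mul_pow, ENNReal.mul_inv_cancel]

lemma coinMeasure_lookupZero (hT : Pairwise (Function.onFun Disjoint T))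
    (hST : ∀ v, Disjoint S (T v)) (hcard : ∀ v, (T v).card = p) :
    coinMeasure ι (lookupZero T) = 2⁻¹ ^ p := by
  have h : coinMeasure ι (lookupZero T)ᶜ = 1 - 2⁻¹ ^ p := by
    simpa [compl_def] using
      coinMeasure_forall_add_notMem_lookupZero hT hST hcard (F := {0}) (by simp)
  rw [← compl_compl (lookupZero T), prob_compl_eq_one_sub measurableSet_lookupZero.compl, h,
    ENNReal.sub_sub_cancel ENNReal.one_ne_top (pow_le_one₀ zero_le (by simp))]

lemma coinMeasure_le_pow_ncard_of_add_notMem_lookupZero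
    (hT : Pairwise (Function.onFun Disjoint T)) (hST : ∀ v, Disjoint S (T v))
    (hcard : ∀ v, (T v).card = p) {V Z : Set (ι → Bool)}
    (h : ∀ x ∈ Z, ∀ y ∈ V, x + y ∉ lookupZero T) :
    coinMeasure ι V ≤ (1 - 2⁻¹ ^ p) ^ (S.restrict '' Z).ncard := by
  obtain ⟨s, hsZ, hs⟩ := exists_subset_bijOn Z S.restrict
  have hfin : s.Finite := hs.finite_iff_finite.2 (toFinite _)
  lift s to Finset (ι → Bool) using hfin
  rw [← hs.image_eq, hs.injOn.ncard_image, ncard_coe_finset,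
    ← coinMeasure_forall_add_notMem_lookupZero hT hST hcard hs.injOn]
  exact measure_mono fun y hy x hx ↦ h x (hsZ hx) y hy

end LookupZero

lemma exists_pairwise_disjoint_card_eq {ι κ : Type*} [Infinite ι] [Countable κ] (S : Finset ι)
    (p : ℕ) : ∃ T : κ → Finset ι, Pairwise (Function.onFun Disjoint T) ∧
      (∀ k, Disjoint S (T k)) ∧ ∀ k, (T k).card = p := by
  have : Infinite {i // i ∉ S} := S.finite_toSet.infinite_compl.to_subtype
  obtain ⟨g, hg⟩ := exists_injective_nat (κ × Fin p)
  let e : κ × Fin p ↪ ι :=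
    (⟨g, hg⟩ : κ × Fin p ↪ ℕ).trans ((Infinite.natEmbedding {i // i ∉ S}).trans (.subtype _))
  refine ⟨fun k ↦ Finset.univ.map ((Function.Embedding.sectR k (Fin p)).trans e), ?_, ?_, ?_⟩
  · intro k l hkl
    refine Finset.disjoint_left.2 fun i hk hl ↦ hkl ?_
    obtain ⟨a, -, ha⟩ := Finset.mem_map.1 hk
    obtain ⟨b, -, rfl⟩ := Finset.mem_map.1 hl
    exact congrArg Prod.fst (e.injective ha)
  · refine fun k ↦ Finset.disjoint_right.2 fun i hi ↦ ?_
    obtain ⟨a, -, rfl⟩ := Finset.mem_map.1 hi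
    exact Subtype.prop (_ : {i // i ∉ S})
  · simp

lemma measure_inter_support_restrict_ne_zero {G : Type*} [TopologicalSpace G]
    [HereditarilyLindelofSpace G] [MeasurableSpace G] {μ : Measure G} {K U : Set G} (hU : IsOpen U)
    (hne : (U ∩ (μ.restrict K).support).Nonempty) : μ (U ∩ (μ.restrict K).support) ≠ 0 := by
  obtain ⟨x, hxU, hx⟩ := hne
  have hpos : μ.restrict K U ≠ 0 :=
    ((Measure.mem_support_iff_forall x).1 hx U (hU.mem_nhds hxU)).ne'
  rw [← measure_inter_conull Measure.measure_compl_support] at hpos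
  exact fun h ↦ hpos (nonpos_iff_eq_zero.1 ((Measure.restrict_apply_le _ _).trans h.le))

section Baire

variable {G : Type*} [TopologicalSpace G] [PolishSpace G]

lemma exists_countableBasis_inter_subset_of_iUnion {S : Set G} (hS : IsClosed S)
    (hne : S.Nonempty) {F : ℕ → Set G} (hF : ∀ n, IsClosed (F n)) (hSF : S ⊆ ⋃ n, F n) :
    ∃ U ∈ countableBasis G, (U ∩ S).Nonempty ∧ ∃ n, U ∩ S ⊆ F n := by
  have : PolishSpace S := hS.polishSpace
  have : Nonempty S := hne.to_subtype
  obtain ⟨n, ⟨x, hxS⟩, hx⟩ := nonempty_interior_of_iUnion_of_closed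
    (f := fun n ↦ (Subtype.val ⁻¹' F n : Set S)) (fun n ↦ (hF n).preimage continuous_subtype_val)
    (eq_univ_of_forall fun x ↦ by simpa using hSF x.2)
  obtain ⟨O, hO, hOF⟩ :=
    isOpen_induced_iff.1 (isOpen_interior (s := (Subtype.val ⁻¹' F n : Set S)))
  have hOF' : (Subtype.val ⁻¹' O : Set S) ⊆ Subtype.val ⁻¹' F n := hOF.le.trans interior_subset
  obtain ⟨U, hU, hxU, hUO⟩ :=
    (isBasis_countableBasis G).exists_subset_of_mem_open (show x ∈ O from hOF.ge hx) hO
  exact ⟨U, hU, ⟨x, hxU, hxS⟩, n, fun y hy ↦ hOF' (a := ⟨y, hy.2⟩) (hUO hy.1)⟩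

variable [MeasurableSpace G] [OpensMeasurableSpace G] {μ : Measure G}

lemma exists_seq_ne_zero_forall_iUnion_isClosed {K : Set G} (hK : IsClosed K) (hpos : μ K ≠ 0) :
    ∃ V : ℕ → Set G, (∀ i, μ (V i) ≠ 0) ∧
      ∀ F : ℕ → Set G, (∀ n, IsClosed (F n)) → K ⊆ ⋃ n, F n → ∃ i n, V i ⊆ F n := by
  set S := (μ.restrict K).support
  have hSK : S ⊆ K := Measure.support_subset_of_isClosed hK (ae_restrict_mem hK.measurableSet)
  have hS : IsClosed S := Measure.isClosed_support
  have hSne : S.Nonempty := by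
    rwa [Measure.nonempty_support_iff, Ne, Measure.restrict_eq_zero]
  let 𝒱 : Set (Set G) := (· ∩ S) '' {U ∈ countableBasis G | (U ∩ S).Nonempty}
  have hbaire {F : ℕ → Set G} (hF : ∀ n, IsClosed (F n)) (hKF : K ⊆ ⋃ n, F n) :
      ∃ V ∈ 𝒱, ∃ n, V ⊆ F n := by
    obtain ⟨U, hU, hUne, hUF⟩ :=
      exists_countableBasis_inter_subset_of_iUnion hS hSne hF (hSK.trans hKF)
    exact ⟨U ∩ S, ⟨U, ⟨hU, hUne⟩, rfl⟩, hUF⟩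
  have hne : 𝒱.Nonempty := by
    obtain ⟨V, hV, -⟩ := hbaire (F := fun _ ↦ K) (fun _ ↦ hK) (iUnion_const K).ge
    exact ⟨V, hV⟩
  have hcount : 𝒱.Countable := ((countable_countableBasis G).mono (sep_subset _ _)).image _
  obtain ⟨V, hV⟩ := hcount.exists_eq_range hne
  refine ⟨V, fun i ↦ ?_, fun F hF hKF ↦ ?_⟩
  · obtain ⟨U, ⟨hU, hUne⟩, hUV⟩ := hV.ge (mem_range_self i)
    exact hUV ▸ measure_inter_support_restrict_ne_zero (isOpen_of_mem_countableBasis hU) hUne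
  · obtain ⟨W, hW, n, hWF⟩ := hbaire hF hKF
    obtain ⟨i, rfl⟩ := hV.le hW
    exact ⟨i, n, hWF⟩

lemma exists_seq_ne_zero_forall_eventually_add_notMem [AddGroup G] [SeparatelyContinuousAdd G]
    [μ.OuterRegular] {X : Set G} {E : ℕ → Set G} (hE : ∀ n, IsOpen (E n))
    (hX : μ (-X + limsup E atTop) < μ univ) :
    ∃ V : ℕ → Set G, (∀ i, μ (V i) ≠ 0) ∧
      ∀ x ∈ X, ∃ i m, ∀ y ∈ V i, ∀ n ≥ m, x + y ∉ E n := by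
  obtain ⟨W, hXW, hW, hWlt⟩ := Set.exists_isOpen_lt_of_lt _ _ hX
  have hWc : μ Wᶜ ≠ 0 := fun h ↦ hWlt.ne (measure_of_measure_compl_eq_zero h)
  obtain ⟨V, hV, hVF⟩ := exists_seq_ne_zero_forall_iUnion_isClosed hW.isClosed_compl hWc
  refine ⟨V, hV, fun x hx ↦ ?_⟩
  refine hVF (fun m ↦ {y | ∀ n ≥ m, x + y ∉ E n}) (fun m ↦ ?_) fun y hy ↦ ?_
  · simp only [ofPred_forall]
    exact isClosed_biInter fun n _ ↦
      ((hE n).preimage (continuous_const_add x)).isClosed_compl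
  · have hy : x + y ∉ limsup E atTop := fun h ↦
      hy (hXW ⟨-x, neg_mem_neg.2 hx, x + y, h, neg_add_cancel_left x y⟩)
    simpa [mem_limsup_iff_frequently_mem] using hy

end Baire

lemma exists_pow_one_sub_le {a b : ℝ≥0∞} (ha : a ≠ 0) (hb : b ≠ 0) : ∃ k : ℕ, (1 - a) ^ k ≤ b := by
  have hlt : 1 - a < 1 := ENNReal.sub_lt_self ENNReal.one_ne_top one_ne_zero ha
  have htend := ENNReal.tendsto_pow_atTop_nhds_zero_of_lt_one hlt
  exact (htend.eventually_le_const (pos_iff_ne_zero.2 hb)).exists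

lemma eventually_ncard_image_accumulate_le {α : Type*} {β : ℕ → Type*} {φ : ∀ n, α → β n}
    {Z : ℕ → Set α} {k : ℕ → ℕ} (hZ : ∀ i, ∀ᶠ n in atTop, (φ n '' Z i).ncard ≤ k n) (i : ℕ) :
    ∀ᶠ n in atTop, (φ n '' accumulate Z i).ncard ≤ n * k n := by
  filter_upwards [(Finset.range (i + 1)).eventually_all.2 fun j _ ↦ hZ j, eventually_gt_atTop i]
    with n hn hin
  have hacc : φ n '' accumulate Z i = ⋃ j ∈ Finset.range (i + 1), φ n '' Z j := by
    simp [accumulate_def, image_iUnion₂]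
  calc (φ n '' accumulate Z i).ncard
      ≤ ∑ j ∈ Finset.range (i + 1), (φ n '' Z j).ncard := by
        rw [hacc]; exact Finset.set_ncard_biUnion_le _ _
    _ ≤ (i + 1) * k n := by simpa using Finset.sum_le_sum hn
    _ ≤ n * k n := Nat.mul_le_mul_right _ hin

section NullAdditive

variable {ι : Type*} {k : ℕ → ℕ}

lemma eventually_ncard_le_of_add_notMem_lookupZero {S : ℕ → Finset ι}
    {T : ∀ n, (S n → Bool) → Finset ι} (hT : ∀ n, Pairwise (Function.onFun Disjoint (T n)))
    (hST : ∀ n v, Disjoint (S n) (T n v)) (hcard : ∀ n v, (T n v).card = n)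
    (hk : ∀ n, (1 - 2⁻¹ ^ n : ℝ≥0∞) ^ k n ≤ 2⁻¹ ^ n) {V Z : Set (ι → Bool)}
    (hV : coinMeasure ι V ≠ 0)
    (hVZ : ∀ᶠ n in atTop, ∀ x ∈ Z, ∀ y ∈ V, x + y ∉ lookupZero (T n)) :
    ∀ᶠ n in atTop, ((S n).restrict '' Z).ncard ≤ k n := by
  have hsmall : ∀ᶠ n : ℕ in atTop, (2⁻¹ : ℝ≥0∞) ^ n < coinMeasure ι V :=
    (ENNReal.tendsto_pow_atTop_nhds_zero_of_lt_one (by simp)).eventually_lt_const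
      (pos_iff_ne_zero.2 hV)
  filter_upwards [hsmall, hVZ] with n hn havoid
  by_contra! hlt
  refine hn.not_ge ?_
  calc coinMeasure ι V ≤ (1 - 2⁻¹ ^ n) ^ ((S n).restrict '' Z).ncard :=
        coinMeasure_le_pow_ncard_of_add_notMem_lookupZero (hT n) (hST n) (hcard n) havoid
    _ ≤ (1 - 2⁻¹ ^ n) ^ k n := pow_le_pow_of_le_one zero_le tsub_le_self hlt.le
    _ ≤ 2⁻¹ ^ n := hk n

theorem exists_monotone_iUnion_eq_eventually_ncard_le [Countable ι] [Infinite ι]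
    {X : Set (ι → Bool)} (hX : ∀ N, coinMeasure ι N = 0 → coinMeasure ι (X + N) < 1)
    (hk : ∀ n, (1 - 2⁻¹ ^ n : ℝ≥0∞) ^ k n ≤ 2⁻¹ ^ n) (S : ℕ → Finset ι) :
    ∃ Y : ℕ → Set (ι → Bool), Monotone Y ∧ ⋃ i, Y i = X ∧
      ∀ i, ∀ᶠ n in atTop, ((S n).restrict '' Y i).ncard ≤ n * k n := by
  choose T hT hST hcard using fun n ↦
    exists_pairwise_disjoint_card_eq (κ := S n → Bool) (S n) n
  have hnull : coinMeasure ι (limsup (fun n ↦ lookupZero (T n)) atTop) = 0 := by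
    refine measure_limsup_atTop_eq_zero ?_
    simp [coinMeasure_lookupZero (hT _) (hST _) (hcard _), ENNReal.tsum_geometric]
  have : PolishSpace (ι → Bool) := {}
  have hneg : -X = X := rfl
  obtain ⟨V, hV, hVX⟩ := exists_seq_ne_zero_forall_eventually_add_notMem (μ := coinMeasure ι)
    (X := X) (fun n ↦ isOpen_lookupZero (T := T n)) (by simpa [hneg] using hX _ hnull)
  let Z (q : ℕ × ℕ) : Set (ι → Bool) :=
    {x ∈ X | ∀ y ∈ V q.1, ∀ n ≥ q.2, x + y ∉ lookupZero (T n)}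
  have hZ (q : ℕ × ℕ) : ∀ᶠ n in atTop, ((S n).restrict '' Z q).ncard ≤ k n :=
    eventually_ncard_le_of_add_notMem_lookupZero hT hST hcard hk (hV q.1) <| by
      filter_upwards [eventually_ge_atTop q.2] with n hn x hx y hy using hx.2 y hy n hn
  have hZX : ⋃ q, Z q = X := by
    refine subset_antisymm (iUnion_subset fun q ↦ sep_subset _ _) fun x hx ↦ ?_
    obtain ⟨i, m, h⟩ := hVX x hx
    exact mem_iUnion.2 ⟨(i, m), hx, h⟩
  refine ⟨accumulate (Z ∘ Nat.unpair), monotone_accumulate, ?_,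
    eventually_ncard_image_accumulate_le fun i ↦ hZ _⟩
  rw [iUnion_accumulate, ← hZX]
  exact Nat.surjective_unpair.iUnion_comp Z

end NullAdditive

section Metric

lemma ediam_restrict_range_preimage_singleton_le (m : ℕ) (v : Finset.range m → Bool) :
    Metric.ediam ((Finset.range m).restrict ⁻¹' {v} : Set (ℕ → Bool)) ≤ 2⁻¹ ^ m := by
  refine Metric.ediam_le fun x hx y hy ↦ ?_
  have hxy : (Finset.range m).restrict x = (Finset.range m).restrict y := hx.trans hy.symm
  have hdist : dist x y ≤ (1 / 2 : ℝ) ^ m := PiNat.mem_cylinder_iff_dist_le.1 fun i hi ↦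
    congrFun hxy ⟨i, Finset.mem_range.2 hi⟩
  rw [edist_dist]
  refine ENNReal.ofReal_le_of_le_toReal (hdist.trans_eq ?_)
  simp

lemma ediam_nat_bool_le_one (s : Set (ℕ → Bool)) : Metric.ediam s ≤ 1 :=
  Metric.ediam_le fun x _ y _ ↦ by
    rw [edist_dist]; exact ENNReal.ofReal_le_one.2 (PiNat.dist_le_one x y)

lemma coinMeasure_le_ediam (s : Set (ℕ → Bool)) : coinMeasure ℕ s ≤ Metric.ediam s := by
  rcases s.eq_empty_or_nonempty with rfl | ⟨x, hx⟩
  · simp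
  refine le_of_forall_gt_imp_ge_of_dense fun c hc ↦ ?_
  rcases le_or_gt 1 c with hc1 | hc1
  · exact prob_le_one.trans hc1
  lift c to NNReal using hc1.ne_top
  obtain ⟨n, hnc, hcn⟩ := exists_nat_pow_near_of_lt_one (x := c) (y := 2⁻¹)
    (ENNReal.coe_pos.1 (pos_of_gt hc)) (mod_cast hc1.le) (by simp) two_inv_lt_one
  have hsub : s ⊆ (Finset.range (n + 1)).restrict ⁻¹' {(Finset.range (n + 1)).restrict x} := by
    intro y hy
    have hyx : nndist y x < c := edist_lt_coe.1 ((Metric.edist_le_ediam_of_mem hy hx).trans_lt hc)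
    have hdist : dist y x < (1 / 2 : ℝ) ^ n := by
      rw [one_div, dist_nndist]
      exact_mod_cast hyx.trans_le hcn
    exact funext fun i ↦
      PiNat.apply_eq_of_dist_lt hdist (Nat.lt_succ_iff.1 (Finset.mem_range.1 i.2))
  calc coinMeasure ℕ s ≤ 2⁻¹ ^ (n + 1) := by
        simpa [coinMeasure_restrict_preimage_singleton] using measure_mono (μ := coinMeasure ℕ) hsub
    _ ≤ c := by
        rw [← ENNReal.coe_two, ← ENNReal.coe_inv two_ne_zero]
        exact_mod_cast hnc.le

lemma ofReal_toReal_ediam_nat_bool (s : Set (ℕ → Bool)) :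
    ENNReal.ofReal (Metric.ediam s).toReal = Metric.ediam s :=
  ENNReal.ofReal_toReal (ne_top_of_le_ne_top ENNReal.one_ne_top (ediam_nat_bool_le_one s))

lemma hMeas_id_univ_le_one : (hMeas (fun r ↦ r) : Measure (ℕ → Bool)) univ ≤ 1 := by
  let fiber (m : ℕ) (v : Finset.range m → Bool) : Set (ℕ → Bool) :=
    (Finset.range m).restrict ⁻¹' {v}
  have hsum (m : ℕ) : ∑ v, ENNReal.ofReal (Metric.ediam (fiber m v)).toReal ≤ 1 := by
    simp only [ofReal_toReal_ediam_nat_bool]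
    refine (Finset.sum_le_sum fun v _ ↦ ediam_restrict_range_preimage_singleton_le m v).trans ?_
    simp [← mul_pow, ENNReal.mul_inv_cancel]
  refine (Measure.mkMetric_le_liminf_sum univ (fun m : ℕ ↦ (2⁻¹ : ℝ≥0∞) ^ m)
    (ENNReal.tendsto_pow_atTop_nhds_zero_of_lt_one (by simp)) fiber
    (.of_forall ediam_restrict_range_preimage_singleton_le)
    (.of_forall fun m x _ ↦ mem_iUnion.2 ⟨_, rfl⟩) _).trans ?_
  exact (liminf_le_liminf (.of_forall hsum)).trans_eq (liminf_const 1)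

lemma hMeas_id_eq_coinMeasure : hMeas (fun r ↦ r) = coinMeasure ℕ := by
  have hle : coinMeasure ℕ ≤ hMeas (fun r ↦ r) :=
    Measure.le_mkMetric _ _ 1 one_pos fun s _ ↦ by
      simpa only [ofReal_toReal_ediam_nat_bool] using coinMeasure_le_ediam s
  have : IsFiniteMeasure (hMeas (fun r ↦ r) : Measure (ℕ → Bool)) :=
    ⟨hMeas_id_univ_le_one.trans_lt ENNReal.one_lt_top⟩
  exact (Measure.eq_of_le_of_measure_univ_eq hle
    (le_antisymm (hle _) (hMeas_id_univ_le_one.trans_eq measure_univ.symm))).symm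

lemma covNum_le_ncard_restrict_range (E : Set (ℕ → Bool)) {m : ℕ} {δ : ℝ≥0∞} (hδ : 2⁻¹ ^ m ≤ δ) :
    covNum E δ ≤ ((Finset.range m).restrict '' E).ncard := by
  classical
  let A : Finset (Finset.range m → Bool) := (toFinite ((Finset.range m).restrict '' E)).toFinset
  let fiber (v : Finset.range m → Bool) : Set (ℕ → Bool) := (Finset.range m).restrict ⁻¹' {v}
  have hcov : covNum E δ ≤ ((A.image fiber).card : ℕ∞) := by
    refine sInf_le ⟨_, ⟨fun x hx ↦ ?_, ?_⟩, rfl⟩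
    · have hxA : (Finset.range m).restrict x ∈ A :=
        (toFinite _).mem_toFinset.2 (mem_image_of_mem _ hx)
      exact mem_biUnion (Finset.mem_coe.2 (Finset.mem_image_of_mem fiber hxA)) rfl
    · simp only [Finset.mem_image, forall_exists_index, and_imp]
      rintro _ v - rfl
      exact (ediam_restrict_range_preimage_singleton_le m v).trans hδ
  rw [ncard_eq_toFinset_card _ (toFinite _)]
  exact hcov.trans (mod_cast Finset.card_image_le)

end Metric

section Scales

lemma exists_ge_succ_le_lt {α : Type*} [LinearOrder α] {u : ℕ → α} {r : α} {N : ℕ} (hN : r < u N)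
    (hex : ∃ n ≥ N, u n ≤ r) : ∃ n ≥ N, u (n + 1) ≤ r ∧ r < u n := by
  by_contra! hlt
  have hall (n : ℕ) (hn : n ≥ N) : r < u n :=
    Nat.le_induction hN (fun m hm hrm ↦ not_le.1 fun hle ↦ (hlt m hm hle).not_gt hrm) n hn
  obtain ⟨n, hn, hle⟩ := hex
  exact (hall n hn).not_ge hle

lemma tendsto_two_inv_pow_atTop_nhds_zero : Tendsto (fun n : ℕ ↦ (2⁻¹ : ℝ) ^ n) atTop (𝓝 0) :=
  tendsto_pow_atTop_nhds_zero_of_lt_one (by norm_num) (by norm_num)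

lemma eventually_forall_Ioo_two_inv_pow {p : ℝ → Prop} (hp : ∀ᶠ r in 𝓝[>] 0, p r) :
    ∀ᶠ m : ℕ in atTop, ∀ r ∈ Ioo 0 ((2⁻¹ : ℝ) ^ m), p r := by
  obtain ⟨ε, hε, hp⟩ := (nhdsGT_basis 0).eventually_iff.1 hp
  filter_upwards [tendsto_two_inv_pow_atTop_nhds_zero.eventually_le_const hε] with m hm r hr
  exact hp ⟨hr.1, hr.2.trans_le hm⟩

lemma ubox0_le_of_eventually_forall_Ioo {E : Set (ℕ → Bool)} {h : ℝ → ℝ} {f : ℕ → ℕ} {c : ℝ≥0∞}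
    (hf : Tendsto f atTop atTop)
    (hc : ∀ᶠ n in atTop, ∀ r ∈ Ioo 0 ((2⁻¹ : ℝ) ^ f n),
      ((Finset.range (f (n + 1))).restrict '' E).ncard * ENNReal.ofReal (h r) ≤ c) :
    ubox0 E h ≤ c := by
  obtain ⟨N, hN⟩ := eventually_atTop.1 hc
  refine limsup_le_of_le (by isBoundedDefault) ?_
  filter_upwards [Ioo_mem_nhdsGT (show 0 < (2⁻¹ : ℝ) ^ f N by positivity)] with r ⟨hr0, hrN⟩
  have hex : ∃ n ≥ N, (2⁻¹ : ℝ) ^ f n ≤ r :=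
    ((eventually_ge_atTop N).and
      ((tendsto_two_inv_pow_atTop_nhds_zero.comp hf).eventually_le_const hr0)).exists
  obtain ⟨n, hn, hnr, hrn⟩ := exists_ge_succ_le_lt (u := fun n ↦ (2⁻¹ : ℝ) ^ f n) hrN hex
  have hnr' : (2⁻¹ : ℝ≥0∞) ^ f (n + 1) ≤ ENNReal.ofReal r := by
    simpa [ENNReal.ofReal_pow, ENNReal.ofReal_inv_of_pos, ENNReal.inv_pow] using
      ENNReal.ofReal_le_ofReal hnr
  calc (covNum E (ENNReal.ofReal r) : ℝ≥0∞) * ENNReal.ofReal (h r)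
      ≤ ((Finset.range (f (n + 1))).restrict '' E).ncard * ENNReal.ofReal (h r) := by
        gcongr
        exact_mod_cast ENat.toENNReal_le.2 (covNum_le_ncard_restrict_range E hnr')
    _ ≤ c := hN n hn r ⟨hr0, hrn⟩

lemma exists_strictMono_forall_Ioo_mul_le {h : ℝ → ℝ} (hh : Tendsto h (𝓝[>] 0) (𝓝 0))
    {K c : ℕ → ℝ≥0∞} (hK : ∀ n, K n ≠ ∞) (hc : ∀ n, c n ≠ 0) :
    ∃ f : ℕ → ℕ, StrictMono f ∧
      ∀ n, ∀ r ∈ Ioo 0 ((2⁻¹ : ℝ) ^ f n), K n * ENNReal.ofReal (h r) ≤ c n := by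
  refine extraction_forall_of_eventually fun n ↦ eventually_forall_Ioo_two_inv_pow ?_
  have hlim : Tendsto (fun r ↦ K n * ENNReal.ofReal (h r)) (𝓝[>] 0) (𝓝 0) := by
    simpa using ENNReal.Tendsto.const_mul (ENNReal.tendsto_ofReal hh) (.inr (hK n))
  exact hlim.eventually_le_const (pos_iff_ne_zero.2 (hc n))

end Scales

lemma IsHausdorffFn.tendsto_nhdsGT_zero_s17 {h : ℝ → ℝ} (hh : IsHausdorffFn h) :
    Tendsto h (𝓝[>] 0) (𝓝 0) := by
  obtain ⟨-, -, hcont, hzero⟩ := hh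
  simpa [(hzero 0 le_rfl).2 rfl] using
    (hcont 0 le_rfl).tendsto.mono_left (nhdsWithin_mono 0 Ioi_subset_Ici_self)

theorem stmt17_general (X : Set (ℕ → Bool))
    (hX : ∀ N, hMeas (fun r ↦ r) N = 0 → hMeas (fun r ↦ r) (X + N) < 1)
    {h : ℝ → ℝ} (hh : Tendsto h (𝓝[>] 0) (𝓝 0)) :
    ∃ Xn : ℕ → Set (ℕ → Bool), Monotone Xn ∧ ⋃ n, Xn n = X ∧ ∀ n, ubox0 (Xn n) h = 0 := by
  choose k hk using fun n : ℕ ↦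
    exists_pow_one_sub_le (a := 2⁻¹ ^ n) (b := 2⁻¹ ^ n) (by simp) (by simp)
  obtain ⟨f, hf, hfh⟩ := exists_strictMono_forall_Ioo_mul_le hh
    (K := fun n ↦ ((n + 1) * k (n + 1) : ℕ)) (c := fun n ↦ (n : ℝ≥0∞)⁻¹)
    (fun _ ↦ ENNReal.natCast_ne_top _) (by simp)
  obtain ⟨Y, hmono, hYX, hY⟩ := exists_monotone_iUnion_eq_eventually_ncard_le
    (hMeas_id_eq_coinMeasure ▸ hX) hk fun n ↦ Finset.range (f n)
  refine ⟨Y, hmono, hYX, fun i ↦ nonpos_iff_eq_zero.1 ?_⟩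
  refine le_of_forall_gt_imp_ge_of_dense fun c hc ↦
    ubox0_le_of_eventually_forall_Ioo hf.tendsto_atTop ?_
  filter_upwards [(tendsto_add_atTop_nat 1).eventually (hY i),
    ENNReal.tendsto_inv_nat_nhds_zero.eventually_le_const hc] with n hn hnc r hr
  calc _ ≤ (((n + 1) * k (n + 1) : ℕ) : ℝ≥0∞) * ENNReal.ofReal (h r) := by gcongr
    _ ≤ (n : ℝ≥0∞)⁻¹ := hfh n r hr
    _ ≤ c := hnc

/-- If `X ⊆ 2^ℕ` is null-additive (w.r.t. the Haar/product measure, which is `H^1`), then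
for every Hausdorff function `h`, `X` is a countable increasing union of sets `Xₙ` with
`limsup_{r→0} N_{Xₙ}(r)·h(r) ≤ 1`. -/
theorem stmt17 (X : Set (ℕ → Bool))
    (hX : ∀ N : Set (ℕ → Bool), hMeas (fun r => r) N = 0 →
      hMeas (fun r => r)
        (Set.image2 (fun x y : ℕ → Bool => fun i => xor (x i) (y i)) X N) = 0) :
    ∀ h : ℝ → ℝ, IsHausdorffFn h →
      ∃ Xn : ℕ → Set (ℕ → Bool), Monotone Xn ∧ (⋃ n, Xn n) = X ∧
        ∀ n, ubox0 (Xn n) h ≤ 1 := by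
  intro h hh
  obtain ⟨Xn, hmono, hXn, h0⟩ :=
    stmt17_general X (fun N hN => (hX N hN).trans_lt one_pos) hh.tendsto_nhdsGT_zero_s17
  exact ⟨Xn, hmono, hXn, fun n => (h0 n).trans_le zero_le_one⟩
end
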